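/- Let $(A, \mathfrak{m})$ be a Cohen-Macaulay local ring of dimension $d > 0$ with infinite residue field, $I$ an $\mathfrak{m}$-primary ideal, and $Q$ a minimal reduction of $I$. Then $e_1(I) = e_0(I) - \ell_A(A/I)$ if and only if $I^2 = QI$; and in that case $e_i(I) = 0$ for all $2 \leq i \leq d$. -/

import Mathlib

open IsLocalRing

/-- A Noetherian local ring is Cohen–Macaulay of dimension `d` iff its Krull dimension
is `d` and there is a regular sequence of length `d` in the maximal ideal. -/
def IsCohenMacaulayLocal (A : Type*) [CommRing A] [IsLocalRing A] (d : ℕ) : Prop :=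
  ringKrullDim A = d ∧
    ∃ rs : List A, rs.length = d ∧ (∀ x ∈ rs, x ∈ maximalIdeal A) ∧
      RingTheory.Sequence.IsRegular A rs

/-- `I` is primary to the maximal ideal (i.e. `𝔪`-primary). -/
def IsPrimaryToMax (A : Type*) [CommRing A] [IsLocalRing A] (I : Ideal A) : Prop :=
  I ≤ maximalIdeal A ∧ maximalIdeal A ≤ I.radical

/-- The length of a module, as the Krull dimension of its submodule lattice. -/
noncomputable def moduleLength (A M : Type*) [CommRing A] [AddCommGroup M]
    [Module A M] : WithBot ℕ∞ :=
  Order.krullDim (Submodule A M)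

/-!
Write `d = k + 1`. A system of parameters `a` of a Cohen–Macaulay ring is a regular sequence, hence
quasi-regular: the associated graded ring of `Q = (a)` is a polynomial ring over `A ⧸ Q`. For
`I ⊇ Q` this gives `ℓ(A ⧸ IQⁿ) = C(n + k, k) ℓ(A ⧸ I) + C(n + k, k + 1) ℓ(A ⧸ Q)`, a polynomial
whose Hilbert coefficients are `ℓ(A ⧸ Q)`, `ℓ(A ⧸ Q) - ℓ(A ⧸ I)`, `0, …, 0`. Comparing
leading terms along `IQⁿ ⊆ Iⁿ⁺¹` and `Iⁿ⁺ʳ ⊆ Qⁿ` yields `e₀(I) = ℓ(A ⧸ Q)`.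

If `I² = QI`, then `Iⁿ⁺¹ = IQⁿ` and the coefficients are read off. Otherwise choose
`x ∈ I² ∖ QI`. By McCoy's theorem a form `F` with a unit coefficient is a nonzerodivisor modulo the
extension of any ideal of `A`, so `F(a) x ∉ IQⁿ⁺¹` for such `F` of degree `n`. Hence
`Iⁿ⁺² ⧸ IQⁿ⁺¹` has length at least `C(n + k, k)`, which grows with degree `d - 1`, and this forces
`e₁(I) > e₀(I) - ℓ(A ⧸ I)`.
-/

section Depth

open RingTheory.Sequence

open scoped Pointwise

universe u

lemma isSMulRegular_iff_forall_isAssociatedPrime_notMem {A M : Type*} [CommRing A]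
    [IsNoetherianRing A] [AddCommGroup M] [Module A M] {x : A} :
    IsSMulRegular M x ↔ ∀ p : Ideal A, IsAssociatedPrime p M → x ∉ p := by
  have := congrArg (x ∈ ·) (biUnion_associatedPrimes_eq_compl_regular A M)
  simpa [associatedPrimes, iff_comm] using this.to_iff.not

lemma eq_bot_of_le_smul_top_of_saturated {A M : Type*} [CommRing A] [AddCommGroup M] [Module A M]
    {x : A} (hx : x ∈ Ideal.jacobson (⊥ : Ideal A)) {N : Submodule A M} (hN : N.FG)
    (hle : N ≤ x • ⊤) (hsat : ∀ m, x • m ∈ N → m ∈ N) : N = ⊥ := by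
  refine Submodule.eq_bot_of_le_smul_of_le_jacobson_bot (Ideal.span {x}) N hN (fun n hn => ?_)
    ((Ideal.span_singleton_le_iff_mem _).mpr hx)
  obtain ⟨m, -, rfl⟩ := (Submodule.mem_smul_pointwise_iff_exists ..).mp (hle hn)
  exact Submodule.smul_mem_smul (Ideal.mem_span_singleton_self x) (hsat m hn)

lemma exists_isAssociatedPrime_quotSMulTop {A M : Type*} [CommRing A] [IsNoetherianRing A]
    [AddCommGroup M] [Module A M] [Module.Finite A M] {x : A}
    (hx : x ∈ Ideal.jacobson (⊥ : Ideal A)) (hreg : IsSMulRegular M x) {p : Ideal A}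
    (hp : IsAssociatedPrime p M) :
    ∃ q : Ideal A, IsAssociatedPrime q (QuotSMulTop x M) ∧ p ≤ q ∧ x ∈ q := by
  let N : Submodule A M := Submodule.torsionBySet A M (p : Set A)
  have mem_N {m : M} : m ∈ N ↔ ∀ r ∈ p, r • m = 0 := by
    simp [N, Submodule.mem_torsionBySet_iff]
  have hN_ne : N ≠ ⊥ := by
    obtain ⟨hprime, m, rfl⟩ := isAssociatedPrime_iff.mp hp
    refine (Submodule.ne_bot_iff _).mpr ⟨m, mem_N.mpr fun r hr => by simpa using hr, ?_⟩
    rintro rfl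
    exact hprime.ne_top (by ext; simp)
  have hN_not_le : ¬ N ≤ x • ⊤ := fun hle =>
    hN_ne <| eq_bot_of_le_smul_top_of_saturated hx (IsNoetherian.noetherian N) hle fun m hm =>
      mem_N.mpr fun r hr => hreg.right_eq_zero_of_smul <| by
        rw [smul_comm]; exact mem_N.mp hm r hr
  obtain ⟨n, hnN, hnx⟩ := SetLike.not_le_iff_exists.mp hN_not_le
  obtain ⟨q, hq, hle⟩ := exists_le_isAssociatedPrime_of_isNoetherianRing A
    (Submodule.Quotient.mk n : QuotSMulTop x M) (by simpa [Submodule.Quotient.mk_eq_zero] using hnx)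
  have smul_mk_mem {r : A} (hr : r • n ∈ x • (⊤ : Submodule A M)) : r ∈ q := hle <| by
    simpa [Submodule.mem_colon_singleton, ← Submodule.Quotient.mk_smul] using hr
  exact ⟨q, hq, fun r hr => smul_mk_mem (by rw [mem_N.mp hnN r hr]; exact zero_mem _),
    smul_mk_mem (Submodule.smul_mem_pointwise_smul _ _ _ trivial)⟩

lemma length_le_ringKrullDim_quotient_of_isAssociatedPrime {A : Type u} [CommRing A]
    [IsLocalRing A] [IsNoetherianRing A] {M : Type u} [AddCommGroup M] [Module A M]
    [Module.Finite A M] {rs : List A} (hrs : ∀ r ∈ rs, r ∈ maximalIdeal A)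
    (hreg : IsRegular M rs) {p : Ideal A} (hp : IsAssociatedPrime p M) :
    (rs.length : WithBot ℕ∞) ≤ ringKrullDim (A ⧸ p) := by
  induction rs generalizing M p with
  | nil =>
    have := hp.isPrime
    simpa using ringKrullDim_nonneg_of_nontrivial
  | cons x rs ih =>
    have := hp.isPrime
    rw [List.forall_mem_cons] at hrs
    rw [isRegular_cons_iff] at hreg
    obtain ⟨q, hq, hpq, hxq⟩ := exists_isAssociatedPrime_quotSMulTop
      (by rw [jacobson_eq_maximalIdeal _ bot_ne_top]; exact hrs.1) hreg.1 hp
    have hxp := isSMulRegular_iff_forall_isAssociatedPrime_notMem.mp hreg.1 p hp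
    have hdim := ringKrullDim_succ_le_of_surjective (Ideal.Quotient.factor hpq)
      (Ideal.Quotient.factor_surjective hpq) (r := Ideal.Quotient.mk p x)
      (mem_nonZeroDivisors_of_ne_zero (by rwa [Ne, Ideal.Quotient.eq_zero_iff_mem]))
      (by rwa [Ideal.Quotient.factor_mk, Ideal.Quotient.eq_zero_iff_mem])
    push_cast [List.length_cons]
    exact (add_le_add_left (ih hrs.2 hreg.2 hq) 1).trans hdim

lemma ringKrullDim_le_length_of_le_radical {A : Type*} [CommRing A] [IsLocalRing A]
    [IsNoetherianRing A] {rs : List A} (hrs : ∀ r ∈ rs, r ∈ maximalIdeal A)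
    (hrad : maximalIdeal A ≤ (Ideal.ofList rs).radical) : ringKrullDim A ≤ rs.length := by
  classical
  have hspan : Ideal.span (rs.toFinset : Set A) = Ideal.ofList rs := by simp [Ideal.ofList]
  have hzero : ringKrullDim (A ⧸ Ideal.ofList rs) ≤ 0 := by
    refine Order.krullDimLE_iff .. |>.mp
      (Ideal.krullDimLE_zero_quotient_iff_forall_minimalPrimes_isMaximal.mpr fun J hJ => ?_)
    have : J.IsPrime := hJ.1.1
    exact (maximalIdeal.isMaximal A).eq_of_le hJ.1.1.ne_top
      (hrad.trans (hJ.1.1.radical_le_iff.mpr hJ.1.2)) ▸ maximalIdeal.isMaximal A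
  calc
    ringKrullDim A ≤ ringKrullDim (A ⧸ Ideal.ofList rs) + rs.toFinset.card := by
      rw [← hspan]
      exact ringKrullDim_le_ringKrullDim_quotient_add_card _ fun r hr => by
        rw [ringJacobson_eq_maximalIdeal]; exact hrs r (by simpa using hr)
    _ ≤ 0 + rs.length := add_le_add hzero (by exact_mod_cast rs.toFinset_card_le)
    _ = rs.length := zero_add _

lemma ringKrullDim_quotient_le_length {A : Type*} [CommRing A] [IsLocalRing A]
    [IsNoetherianRing A] (p : Ideal A) [Nontrivial (A ⧸ p)] {rs : List A}
    (hrs : ∀ r ∈ rs, r ∈ maximalIdeal A)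
    (hrad : maximalIdeal A ≤ (p ⊔ Ideal.ofList rs).radical) :
    ringKrullDim (A ⧸ p) ≤ rs.length := by
  have hmk : Function.Surjective (Ideal.Quotient.mk p) := Ideal.Quotient.mk_surjective
  have : IsLocalRing (A ⧸ p) := .of_surjective' _ hmk
  have hmap := map_maximalIdeal_of_surjective (Ideal.Quotient.mk p) hmk
  rw [← List.length_map (Ideal.Quotient.mk p)]
  refine ringKrullDim_le_length_of_le_radical (fun y hy => ?_) ?_
  · obtain ⟨r, hr, rfl⟩ := List.mem_map.mp hy
    exact hmap ▸ Ideal.mem_map_of_mem _ (hrs r hr)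
  · calc
      maximalIdeal (A ⧸ p) ≤ ((p ⊔ Ideal.ofList rs).map (Ideal.Quotient.mk p)).radical :=
        hmap ▸ (Ideal.map_mono hrad).trans (Ideal.map_radical_le _)
      _ = (Ideal.ofList (rs.map (Ideal.Quotient.mk p))).radical := by
        rw [Ideal.map_sup, Ideal.map_quotient_self, bot_sup_eq, Ideal.map_ofList]

variable {A : Type u} [CommRing A] [IsLocalRing A] [IsNoetherianRing A]
  {M : Type u} [AddCommGroup M] [Module A M] [Module.Finite A M]

lemma isSMulRegular_of_maximalIdeal_le_radical {x : A} {xs rs : List A}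
    (hrs : ∀ r ∈ x :: rs, r ∈ maximalIdeal A)
    (hrad : maximalIdeal A ≤ (Module.annihilator A M ⊔ Ideal.ofList (x :: rs)).radical)
    (hxs : ∀ r ∈ xs, r ∈ maximalIdeal A) (hreg : IsRegular M xs) (hlt : rs.length < xs.length) :
    IsSMulRegular M x := by
  -- An associated prime containing `x` would have a quotient of dimension at most `rs.length`.
  refine isSMulRegular_iff_forall_isAssociatedPrime_notMem.mpr fun p hp hxp => ?_
  have := hp.isPrime
  have hann : Module.annihilator A M ≤ p :=
    Submodule.annihilator_top (R := A) (M := M) ▸ hp.annihilator_le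
  have hle : Module.annihilator A M ⊔ Ideal.ofList (x :: rs) ≤ p ⊔ Ideal.ofList rs := by
    rw [Ideal.ofList_cons, ← sup_assoc]
    exact sup_le_sup_right (sup_le hann ((Ideal.span_singleton_le_iff_mem p).mpr hxp)) _
  have hdim := (length_le_ringKrullDim_quotient_of_isAssociatedPrime hxs hreg hp).trans
    (ringKrullDim_quotient_le_length p (List.forall_mem_of_forall_mem_cons hrs)
      (hrad.trans (Ideal.radical_mono hle)))
  exact hlt.not_ge (by exact_mod_cast hdim)

-- Depth at least `n` means `Ext i (A ⧸ 𝔪) M = 0` for `i < n`, so the long exact sequence of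
-- `0 → M → M → M ⧸ xM → 0` shows that dividing by `x` lowers the depth by at most one.
open CategoryTheory Abelian Limits in
lemma exists_isRegular_quotSMulTop {n : ℕ}
    (h : ∃ rs : List A, rs.length = n + 1 ∧ (∀ r ∈ rs, r ∈ maximalIdeal A) ∧ IsRegular M rs)
    {x : A} (hx : x ∈ maximalIdeal A) (hreg : IsSMulRegular M x) :
    ∃ rs : List A, rs.length = n ∧ (∀ r ∈ rs, r ∈ maximalIdeal A) ∧
      IsRegular (QuotSMulTop x M) rs := by
  have : Nontrivial M := h.choose_spec.2.2.nontrivial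
  have : Nontrivial (QuotSMulTop x M) := nontrivial_quotSMulTop_of_mem_maximalIdeal M hx
  have smul_top_lt (N : Type u) [AddCommGroup N] [Module A N] [Module.Finite A N] [Nontrivial N] :
      maximalIdeal A • (⊤ : Submodule A N) < ⊤ :=
    (Submodule.top_ne_ideal_smul_of_le_jacobson_annihilator
      (maximalIdeal_le_jacobson _)).symm.lt_top
  have ext_eq_zero := ((ModuleCat.exists_isRegular_tfae (maximalIdeal A) (n + 1)
    (ModuleCat.of A M) (smul_top_lt M)).out 1 3).mpr h
  refine ((ModuleCat.exists_isRegular_tfae (maximalIdeal A) n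
    (ModuleCat.of A (QuotSMulTop x M)) (smul_top_lt _)).out 1 3).mp fun i hi => ?_
  have exact_seq := Ext.covariant_sequence_exact₃'
    (ModuleCat.of A (Shrink.{u} (A ⧸ maximalIdeal A)))
    (IsSMulRegular.smulShortComplex_shortExact (M := ModuleCat.of A M) hreg) i (i + 1) rfl
  have left_zero := AddCommGrpCat.isZero_of_iff_subsingleton.mpr (ext_eq_zero i (by lia))
  have right_zero := AddCommGrpCat.isZero_of_iff_subsingleton.mpr (ext_eq_zero (i + 1) (by lia))
  exact AddCommGrpCat.subsingleton_of_isZero <|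
    exact_seq.isZero_of_both_zeros (left_zero.eq_zero_of_src _) (right_zero.eq_zero_of_tgt _)

lemma isWeaklyRegular_of_maximalIdeal_le_radical {rs : List A}
    (hrs : ∀ r ∈ rs, r ∈ maximalIdeal A)
    (hdepth : ∃ xs : List A, xs.length = rs.length ∧ (∀ r ∈ xs, r ∈ maximalIdeal A) ∧
      IsRegular M xs)
    (hrad : maximalIdeal A ≤ (Module.annihilator A M ⊔ Ideal.ofList rs).radical) :
    IsWeaklyRegular M rs := by
  induction rs generalizing M with
  | nil => simp
  | cons x rs ih =>
    obtain ⟨xs, hlen, hxs, hxs_reg⟩ := hdepth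
    have hreg : IsSMulRegular M x :=
      isSMulRegular_of_maximalIdeal_le_radical hrs hrad hxs hxs_reg (by simp [hlen])
    obtain ⟨hx, hrs⟩ := List.forall_mem_cons.mp hrs
    have hx_ann : x ∈ Module.annihilator A (QuotSMulTop x M) :=
      Module.mem_annihilator.mpr fun m => by
        obtain ⟨m, rfl⟩ := Submodule.mkQ_surjective _ m
        exact (Submodule.Quotient.mk_eq_zero _).mpr
          (Submodule.smul_mem_pointwise_smul m x ⊤ trivial)
    have hann_le : Module.annihilator A M ≤ Module.annihilator A (QuotSMulTop x M) :=
      LinearMap.annihilator_le_of_surjective _ (Submodule.mkQ_surjective _)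
    refine .cons hreg (ih hrs (exists_isRegular_quotSMulTop ⟨xs, hlen, hxs, hxs_reg⟩ hx hreg)
      (hrad.trans (Ideal.radical_mono ?_)))
    rw [Ideal.ofList_cons, ← sup_assoc]
    exact sup_le_sup_right (sup_le hann_le ((Ideal.span_singleton_le_iff_mem _).mpr hx_ann)) _

end Depth

section QuasiRegular

open MvPolynomial RingTheory.Sequence

lemma mem_nonZeroDivisors_of_coeff_mem_nonZeroDivisors {R : Type*} [CommRing R] {d : ℕ}
    {F : MvPolynomial (Fin d) R} {m : Fin d →₀ ℕ} (hF : F.coeff m ∈ nonZeroDivisors R) :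
    F ∈ nonZeroDivisors (MvPolynomial (Fin d) R) := by
  induction d with
  | zero =>
    refine mem_nonZeroDivisors_of_injective (isEmptyAlgEquiv R (Fin 0)).injective ?_
    rwa [eq_C_of_isEmpty F, ← algebraMap_eq, AlgEquiv.commutes, Algebra.algebraMap_self_apply,
      Subsingleton.elim 0 m]
  | succ d ih =>
    refine mem_nonZeroDivisors_of_injective (finSuccEquiv R d).injective
      (Polynomial.mem_nonzeroDivisors_of_coeff_mem (m 0) (ih (m := m.tail) ?_))
    rwa [finSuccEquiv_coeff_coeff, Finsupp.cons_tail]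

lemma mem_map_C_of_mul_mem_map_C {R : Type*} [CommRing R] {d : ℕ} {J : Ideal R}
    {F G : MvPolynomial (Fin d) R} {m : Fin d →₀ ℕ} (hF : IsUnit (F.coeff m))
    (hFG : F * G ∈ J.map C) : G ∈ J.map C := by
  rw [← Ideal.mk_ker (I := J), ← ker_map, RingHom.mem_ker] at hFG ⊢
  have hF' : map (Ideal.Quotient.mk J) F ∈ nonZeroDivisors (MvPolynomial (Fin d) (R ⧸ J)) :=
    mem_nonZeroDivisors_of_coeff_mem_nonZeroDivisors (m := m) <| by
      rw [coeff_map]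
      exact (hF.map _).mem_nonZeroDivisors
  exact hF'.1 _ (by rwa [← map_mul])

section

variable {A σ : Type*} [CommRing A] {a : σ → A} {J : Ideal A} {n : ℕ}

lemma mem_mul_span_pow_iff_exists_isHomogeneous {y : A} :
    y ∈ J * Ideal.span (Set.range a) ^ n ↔
      ∃ F : MvPolynomial σ A, F.IsHomogeneous n ∧ F ∈ J.map C ∧ eval a F = y := by
  constructor
  · intro hy
    induction hy using Submodule.mul_induction_on' with
    | mem_mul_mem c hc s hs =>
      obtain ⟨F, hF, rfl⟩ := (Ideal.mem_span_pow_iff_exists_isHomogeneous a s).mp hs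
      exact ⟨C c * F, hF.C_mul c, Ideal.mul_mem_right _ _ (Ideal.mem_map_of_mem C hc), by simp⟩
    | add x _ y _ hx hy =>
      obtain ⟨F, hF, hFJ, rfl⟩ := hx
      obtain ⟨G, hG, hGJ, rfl⟩ := hy
      exact ⟨F + G, hF.add hG, add_mem hFJ hGJ, map_add ..⟩
  · rintro ⟨F, hF, hFJ, rfl⟩
    rw [F.as_sum, map_sum]
    refine Ideal.sum_mem _ fun m hm => ?_
    rw [← mul_one (coeff m F), ← C_mul_monomial, map_mul, eval_C]
    refine Ideal.mul_mem_mul (mem_map_C_iff.mp hFJ m)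
      ((Ideal.mem_span_pow_iff_exists_isHomogeneous a _).mpr
        ⟨_, isHomogeneous_monomial 1 ?_, rfl⟩)
    rw [Finsupp.degree_eq_weight_one]
    exact hF (mem_support_iff.mp hm)

lemma eval_mem_mul_span_pow_iff
    (ha : ∀ F : MvPolynomial σ A, F.IsHomogeneous n → eval a F = 0 →
      F ∈ (Ideal.span (Set.range a)).map C)
    (hJ : Ideal.span (Set.range a) ≤ J) {F : MvPolynomial σ A} (hF : F.IsHomogeneous n) :
    eval a F ∈ J * Ideal.span (Set.range a) ^ n ↔ F ∈ J.map C := by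
  refine ⟨fun h => ?_, fun h => mem_mul_span_pow_iff_exists_isHomogeneous.mpr ⟨F, hF, h, rfl⟩⟩
  obtain ⟨G, hG, hGJ, hGF⟩ := mem_mul_span_pow_iff_exists_isHomogeneous.mp h
  have hFG := ha (F - G) (hF.sub hG) (by rw [map_sub, hGF, sub_self])
  exact (Submodule.sub_mem_iff_left _ hGJ).mp (Ideal.map_mono hJ hFG)

/-- The elements `a` are quasi-regular: every form vanishing at `a` has its coefficients in the
ideal generated by `a`. Equivalently, the associated graded ring of `(a)` is a polynomial ring
over `A ⧸ (a)`. -/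
def IsQuasiRegular (a : σ → A) : Prop :=
  ∀ (n : ℕ) (F : MvPolynomial σ A), F.IsHomogeneous n → eval a F = 0 →
    F ∈ (Ideal.span (Set.range a)).map C

namespace IsQuasiRegular

lemma eval_mem_iff (ha : IsQuasiRegular a) (hJ : Ideal.span (Set.range a) ≤ J)
    {F : MvPolynomial σ A} (hF : F.IsHomogeneous n) :
    eval a F ∈ J * Ideal.span (Set.range a) ^ n ↔ F ∈ J.map C :=
  eval_mem_mul_span_pow_iff (ha n) hJ hF

lemma mem_span_pow_of_mul_mem (ha : IsQuasiRegular a) {r : A}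
    (hr : ∀ y, r * y ∈ Ideal.span (Set.range a) → y ∈ Ideal.span (Set.range a)) {y : A}
    (hy : r * y ∈ Ideal.span (Set.range a) ^ n) : y ∈ Ideal.span (Set.range a) ^ n := by
  induction n with
  | zero => simp
  | succ n ih =>
    obtain ⟨F, hF, rfl⟩ := (Ideal.mem_span_pow_iff_exists_isHomogeneous a y).mp
      (ih (Ideal.pow_le_pow_right n.le_succ hy))
    rw [pow_succ', ← eval_C (f := a) r, ← map_mul, ha.eval_mem_iff le_rfl (hF.C_mul r),
      mem_map_C_iff] at hy
    rw [pow_succ', ha.eval_mem_iff le_rfl hF, mem_map_C_iff]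
    exact fun m => hr _ (coeff_C_mul m r F ▸ hy m)

end IsQuasiRegular

end

lemma exists_eq_X_mul_add_rename_succAbove {R : Type*} [CommRing R] {d n : ℕ} (i : Fin (d + 1))
    {F : MvPolynomial (Fin (d + 1)) R} (hF : F.IsHomogeneous (n + 1)) :
    ∃ (H : MvPolynomial (Fin (d + 1)) R) (G : MvPolynomial (Fin d) R),
      H.IsHomogeneous n ∧ G.IsHomogeneous (n + 1) ∧ F = X i * H + rename i.succAbove G := by
  set H := F.divMonomial (Finsupp.single i 1)
  set G := F.modMonomial (Finsupp.single i 1)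
  have hFHG : X i * H + G = F := divMonomial_add_modMonomial_single F i
  have hH : H.IsHomogeneous n := fun m hm => by
    have := hF (coeff_divMonomial (Finsupp.single i 1) F m ▸ hm)
    rw [map_add, Finsupp.weight_single] at this
    simpa [add_comm 1] using this
  have hG_vars : (G.vars : Set (Fin (d + 1))) ⊆ Set.range i.succAbove := by
    rw [Fin.range_succAbove, Set.subset_compl_singleton_iff, Finset.mem_coe,
      mem_vars_iff_mem_support]
    rintro ⟨m, hm, him⟩
    exact mem_support_iff.mp hm (coeff_modMonomial_of_le F
      (Finsupp.single_le_iff.mpr (Nat.one_le_iff_ne_zero.mpr (Finsupp.mem_support_iff.mp him))))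
  obtain ⟨G', hG'⟩ := exists_rename_eq_of_vars_subset_range G _ i.succAbove_right_injective hG_vars
  refine ⟨H, G', hH, ?_, hG'.symm ▸ hFHG.symm⟩
  rw [← IsHomogeneous.rename_isHomogeneous_iff i.succAbove_right_injective, hG',
    ← add_sub_cancel_left (X i * H) G, hFHG]
  exact hF.sub (add_comm 1 n ▸ (isHomogeneous_X R i).mul hH)

lemma isQuasiRegular_of_comp_succAbove {A : Type*} [CommRing A] {d : ℕ} {a : Fin (d + 1) → A}
    (i : Fin (d + 1)) (ha : IsQuasiRegular (a ∘ i.succAbove))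
    (hi : ∀ y, a i * y ∈ Ideal.span (Set.range (a ∘ i.succAbove)) →
      y ∈ Ideal.span (Set.range (a ∘ i.succAbove))) :
    IsQuasiRegular a := by
  have hle : Ideal.span (Set.range (a ∘ i.succAbove)) ≤ Ideal.span (Set.range a) :=
    Ideal.span_mono (Set.range_comp_subset_range ..)
  have hai : a i ∈ Ideal.span (Set.range a) := Ideal.subset_span ⟨i, rfl⟩
  intro n
  induction n with
  | zero =>
    intro F hF hF0
    rw [← totalDegree_zero_iff_isHomogeneous, totalDegree_eq_zero_iff_eq_C] at hF
    rw [hF, eval_C] at hF0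
    rw [hF, hF0, C_0]
    exact zero_mem _
  | succ n ih =>
    intro F hF hF0
    obtain ⟨H, G, hH, hG, rfl⟩ := exists_eq_X_mul_add_rename_succAbove i hF
    rw [map_add, map_mul, eval_X, eval_rename] at hF0
    have hHa : eval a H ∈ Ideal.span (Set.range (a ∘ i.succAbove)) ^ (n + 1) := by
      refine ha.mem_span_pow_of_mul_mem hi ?_
      rw [eq_neg_of_add_eq_zero_left hF0, Ideal.neg_mem_iff]
      exact (Ideal.mem_span_pow_iff_exists_isHomogeneous _ _).mpr ⟨G, hG, rfl⟩
    have hHQ : H ∈ (Ideal.span (Set.range a)).map C :=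
      (eval_mem_mul_span_pow_iff ih le_rfl hH).mp
        (pow_succ' (Ideal.span (Set.range a)) n ▸ Ideal.pow_right_mono hle _ hHa)
    obtain ⟨H', hH', hH'H⟩ := (Ideal.mem_span_pow_iff_exists_isHomogeneous _ _).mp hHa
    have hGH' : G + C (a i) * H' ∈ (Ideal.span (Set.range a)).map C :=
      Ideal.map_mono hle <| ha _ _ (hG.add (hH'.C_mul _)) <| by
        rw [map_add, map_mul, eval_C, hH'H, add_comm, hF0]
    have hGQ : G ∈ (Ideal.span (Set.range a)).map C :=
      (Submodule.add_mem_iff_left _ (Ideal.mul_mem_right _ _ (Ideal.mem_map_of_mem C hai))).mp hGH'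
    have hrename := Ideal.mem_map_of_mem (rename i.succAbove).toRingHom hGQ
    rw [Ideal.map_map, show (rename i.succAbove).toRingHom.comp C = C from
      RingHom.ext (rename_C i.succAbove)] at hrename
    exact add_mem (Ideal.mul_mem_left _ _ hHQ) hrename

lemma ofList_ofFn {R : Type*} [CommSemiring R] {d : ℕ} (a : Fin d → R) :
    Ideal.ofList (List.ofFn a) = Ideal.span (Set.range a) :=
  congrArg Ideal.span (Set.ext fun _ => List.mem_ofFn)

lemma isQuasiRegular_of_isWeaklyRegular_ofFn {A : Type*} [CommRing A] {d : ℕ} {a : Fin d → A}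
    (h : IsWeaklyRegular A (List.ofFn a)) : IsQuasiRegular a := by
  induction d with
  | zero =>
    intro n F _ hF0
    rw [eq_C_of_isEmpty F, eval_C] at hF0
    rw [eq_C_of_isEmpty F, hF0, C_0]
    exact zero_mem _
  | succ d ih =>
    rw [List.ofFn_succ', List.concat_eq_append, isWeaklyRegular_append_iff,
      isWeaklyRegular_singleton_iff] at h
    have hcomp : (fun i : Fin d => a i.castSucc) = a ∘ (Fin.last d).succAbove := by
      rw [Fin.succAbove_last]; rfl
    refine isQuasiRegular_of_comp_succAbove (Fin.last d) (hcomp ▸ ih h.1) fun y hy => ?_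
    rw [hcomp, ofList_ofFn, smul_eq_mul, Ideal.mul_top,
      isSMulRegular_quotient_iff_mem_of_smul_mem] at h
    exact h.2 y hy

lemma IsCohenMacaulayLocal.isQuasiRegular {A : Type*} [CommRing A] [IsLocalRing A]
    [IsNoetherianRing A] {d : ℕ} (hCM : IsCohenMacaulayLocal A d) {a : Fin d → A}
    (ha : ∀ i, a i ∈ maximalIdeal A)
    (hrad : maximalIdeal A ≤ (Ideal.span (Set.range a)).radical) : IsQuasiRegular a := by
  refine isQuasiRegular_of_isWeaklyRegular_ofFn (isWeaklyRegular_of_maximalIdeal_le_radical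
    (List.forall_mem_ofFn_iff.mpr ha) (by simpa using hCM.2) ?_)
  rw [ofList_ofFn]
  exact hrad.trans (Ideal.radical_mono le_sup_right)

end QuasiRegular

section Length

open MvPolynomial

lemma card_degree_eq (k n : ℕ) :
    ENat.card {m : Fin (k + 1) →₀ ℕ // m.degree = n} = (n + k).choose k := by
  have : Finite {m : Fin (k + 1) →₀ ℕ // m.degree = n} := Finsupp.finite_of_degree_eq n
  have mem_iff (m : Fin (k + 1) →₀ ℕ) : m ∈ Finset.univ.finsuppAntidiag n ↔ m.degree = n := by
    simp [Finset.mem_finsuppAntidiag, Finsupp.degree_eq_sum]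
  rw [ENat.card_eq_coe_natCard, Nat.subtype_card _ mem_iff,
    Finset.card_finsuppAntidiag_nat_eq_choose, Finset.card_fin, Nat.add_right_comm,
    Nat.add_sub_cancel, add_comm k, Nat.choose_symm_add]

lemma length_homogeneousSubmodule_quotient {R σ : Type*} [CommRing R] [Finite σ] (n : ℕ)
    (J : Ideal R) :
    Module.length R (homogeneousSubmodule σ R n ⧸
        ((J.map C).restrictScalars R).submoduleOf (homogeneousSubmodule σ R n)) =
      ENat.card {m : σ →₀ ℕ // m.degree = n} * Module.length R (R ⧸ J) := by
  classical
  let f : homogeneousSubmodule σ R n →ₗ[R] {m : σ →₀ ℕ // m.degree = n} → R ⧸ J :=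
    LinearMap.pi fun m => J.mkQ ∘ₗ lcoeff R m.1 ∘ₗ Submodule.subtype _
  have hf_ker : LinearMap.ker f =
      ((J.map C).restrictScalars R).submoduleOf (homogeneousSubmodule σ R n) := by
    ext ⟨F, hF⟩
    have hf_zero : f ⟨F, hF⟩ = 0 ↔ ∀ m, m.degree = n → coeff m F ∈ J := by
      simp [f, _root_.funext_iff, Ideal.Quotient.eq_zero_iff_mem]
    refine hf_zero.trans ⟨fun h => mem_map_C_iff.mpr fun m => ?_, fun h m _ => mem_map_C_iff.mp h m⟩
    by_cases hm : m.degree = n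
    · exact h m hm
    · exact (IsHomogeneous.coeff_eq_zero hF hm).symm ▸ J.zero_mem
  have hf_surj : Function.Surjective f := by
    intro c
    choose b hb using fun m => J.mkQ_surjective (c m)
    have : Fintype {m : σ →₀ ℕ // m.degree = n} := (Finsupp.finite_of_degree_eq n).fintype
    refine ⟨⟨∑ m, monomial m.1 (b m), sum_mem fun m _ => isHomogeneous_monomial _ m.2⟩, ?_⟩
    ext m
    simp [f, coeff_monomial, Subtype.coe_inj, hb]
  rw [← hf_ker, (f.quotKerEquivOfSurjective hf_surj).length_eq, Module.length_pi]

lemma length_quotient_eq_add {R M : Type*} [Ring R] [AddCommGroup M] [Module R M]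
    {K L : Submodule R M} (h : K ≤ L) :
    Module.length R (M ⧸ K) = Module.length R (L.map K.mkQ) + Module.length R (M ⧸ L) := by
  rw [Module.length_eq_add_of_exact (L.map K.mkQ).subtype (L.map K.mkQ).mkQ
    (Submodule.subtype_injective _) (Submodule.mkQ_surjective _)
    (LinearMap.exact_subtype_mkQ _), (Submodule.quotientQuotientEquivQuotient K L h).length_eq]

lemma length_quotient_le_of_le {R M : Type*} [Ring R] [AddCommGroup M] [Module R M]
    {K L : Submodule R M} (h : K ≤ L) : Module.length R (M ⧸ L) ≤ Module.length R (M ⧸ K) :=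
  Module.length_le_of_surjective _ (Submodule.factor_surjective h)

section

variable {A : Type*} [CommRing A] {k : ℕ} {a : Fin (k + 1) → A} {J : Ideal A}

lemma IsQuasiRegular.length_quotient_mul_span_pow (ha : IsQuasiRegular a)
    (hJ : Ideal.span (Set.range a) ≤ J) (n : ℕ) :
    Module.length A (A ⧸ J * Ideal.span (Set.range a) ^ n) =
      (n + k).choose k * Module.length A (A ⧸ J) +
        Module.length A (A ⧸ Ideal.span (Set.range a) ^ n) := by
  set Q := Ideal.span (Set.range a)
  let f : homogeneousSubmodule (Fin (k + 1)) A n →ₗ[A] A ⧸ J * Q ^ n :=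
    (J * Q ^ n).mkQ ∘ₗ (aeval a).toLinearMap ∘ₗ Submodule.subtype _
  have hf_ker : LinearMap.ker f = ((J.map C).restrictScalars A).submoduleOf _ := by
    ext ⟨F, hF⟩
    exact (Submodule.Quotient.mk_eq_zero _).trans (ha.eval_mem_iff hJ hF)
  have hf_range : LinearMap.range f = Submodule.map (J * Q ^ n).mkQ (Q ^ n) := by
    rw [LinearMap.range_comp, LinearMap.range_comp, Submodule.range_subtype]
    congr 1
    ext y
    exact (Ideal.mem_span_pow_iff_exists_isHomogeneous a y).symm
  rw [length_quotient_eq_add (Ideal.mul_le_right : J * Q ^ n ≤ Q ^ n), ← hf_range,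
    ← f.quotKerEquivRange.length_eq, hf_ker, length_homogeneousSubmodule_quotient, card_degree_eq]

lemma IsQuasiRegular.length_quotient_span_pow (ha : IsQuasiRegular a) (n : ℕ) :
    Module.length A (A ⧸ Ideal.span (Set.range a) ^ n) =
      (n + k).choose (k + 1) * Module.length A (A ⧸ Ideal.span (Set.range a)) := by
  induction n with
  | zero =>
    have : Subsingleton (A ⧸ Ideal.span (Set.range a) ^ 0) := by
      rw [pow_zero]; exact Ideal.Quotient.subsingleton_iff.mpr Ideal.one_eq_top
    simp [Module.length_eq_zero]
  | succ n ih =>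
    rw [pow_succ', ha.length_quotient_mul_span_pow le_rfl, ih, ← add_mul, add_right_comm n 1 k,
      Nat.choose_succ_succ, Nat.cast_add]

lemma IsQuasiRegular.mem_mul_span_of_eval_mul_mem (ha : IsQuasiRegular a)
    (hJ : Ideal.span (Set.range a) ≤ J) {n : ℕ} {F : MvPolynomial (Fin (k + 1)) A}
    (hF : F.IsHomogeneous n) {m : Fin (k + 1) →₀ ℕ} (hFm : IsUnit (F.coeff m)) {x : A}
    (h : eval a F * x ∈ J * Ideal.span (Set.range a) ^ (n + 1)) :
    x ∈ J * Ideal.span (Set.range a) := by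
  have hxF : C x * F ∈ (Ideal.span (Set.range a)).map C := by
    refine (ha.eval_mem_iff le_rfl (hF.C_mul x)).mp ?_
    rw [map_mul, eval_C, mul_comm x, ← pow_succ']
    exact Ideal.mul_le_right h
  have hx : x ∈ Ideal.span (Set.range a) ^ 1 := by
    rw [pow_one, ← Ideal.mul_unit_mem_iff_mem _ hFm, ← coeff_C_mul]
    exact mem_map_C_iff.mp hxF m
  obtain ⟨L, hL, rfl⟩ := (Ideal.mem_span_pow_iff_exists_isHomogeneous a x).mp hx
  rw [← map_mul, ha.eval_mem_iff hJ (hF.mul hL)] at h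
  have hLa := (ha.eval_mem_iff hJ hL).mpr (mem_map_C_of_mul_mem_map_C hFm h)
  rwa [pow_one] at hLa

lemma IsQuasiRegular.choose_add_length_quotient_pow_le [IsLocalRing A] (ha : IsQuasiRegular a)
    (hJ : Ideal.span (Set.range a) ≤ J) (hne : J ^ 2 ≠ Ideal.span (Set.range a) * J) (n : ℕ) :
    (n + k).choose k + Module.length A (A ⧸ J ^ (n + 2)) ≤
      Module.length A (A ⧸ J * Ideal.span (Set.range a) ^ (n + 1)) := by
  set Q := Ideal.span (Set.range a)
  obtain ⟨x, hx, hxQ⟩ : ∃ x ∈ J ^ 2, x ∉ J * Q := by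
    rw [← SetLike.not_le_iff_exists, mul_comm]
    exact fun h => hne (h.antisymm (pow_two J ▸ Ideal.mul_mono_left hJ))
  let f : homogeneousSubmodule (Fin (k + 1)) A n →ₗ[A] A ⧸ J * Q ^ (n + 1) :=
    (J * Q ^ (n + 1)).mkQ ∘ₗ LinearMap.mulRight A x ∘ₗ (aeval a).toLinearMap ∘ₗ
      Submodule.subtype _
  have hf_ker :
      LinearMap.ker f ≤ (((maximalIdeal A).map C).restrictScalars A).submoduleOf _ := by
    rintro ⟨F, hF⟩ hFx
    refine mem_map_C_iff.mpr fun m => by_contra fun hm => hxQ ?_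
    exact ha.mem_mul_span_of_eval_mul_mem hJ hF (notMem_maximalIdeal.mp hm)
      ((Submodule.Quotient.mk_eq_zero _).mp hFx)
  have hf_range : LinearMap.range f ≤ Submodule.map (J * Q ^ (n + 1)).mkQ (J ^ (n + 2)) := by
    rw [LinearMap.range_comp]
    refine Submodule.map_mono ?_
    rintro _ ⟨F, rfl⟩
    rw [pow_add]
    exact Ideal.mul_mem_mul (Ideal.pow_right_mono hJ n
      ((Ideal.mem_span_pow_iff_exists_isHomogeneous a _).mpr ⟨F.1, F.2, rfl⟩)) hx
  have hle : J * Q ^ (n + 1) ≤ J ^ (n + 2) :=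
    pow_succ' J (n + 1) ▸ Ideal.mul_mono_right (Ideal.pow_right_mono hJ _)
  have : IsSimpleModule A (A ⧸ maximalIdeal A) :=
    isSimpleModule_iff_isCoatom.mpr Ideal.IsMaximal.out
  rw [length_quotient_eq_add hle]
  refine add_le_add_left ?_ _
  calc
    ((n + k).choose k : ℕ∞)
      = Module.length A (homogeneousSubmodule (Fin (k + 1)) A n ⧸
          (((maximalIdeal A).map C).restrictScalars A).submoduleOf _) := by
        rw [length_homogeneousSubmodule_quotient, card_degree_eq, Module.length_eq_one, mul_one]
    _ ≤ Module.length A (_ ⧸ LinearMap.ker f) := length_quotient_le_of_le hf_ker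
    _ = Module.length A (LinearMap.range f) := f.quotKerEquivRange.length_eq
    _ ≤ _ := Module.length_le_of_injective _ (Submodule.inclusion_injective hf_range)

end

end Length

section HilbertCoefficients

open Filter Topology Nat

lemma tendsto_add_div_pow {f : ℕ → ℝ} {d : ℕ} {c : ℝ}
    (h : Tendsto (fun n : ℕ => f n / n ^ d) atTop (𝓝 c)) (s : ℕ) :
    Tendsto (fun n : ℕ => f (n + s) / n ^ d) atTop (𝓝 c) := by
  have hlim := ((tendsto_add_atTop_iff_nat s).mpr h).div
    ((tendsto_natCast_div_add_atTop (s : ℝ)).pow d) (by simp)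
  rw [one_pow, div_one] at hlim
  refine hlim.congr' ?_
  filter_upwards [eventually_gt_atTop 0] with n hn
  have : (n : ℝ) + s ≠ 0 := by positivity
  simp only [Pi.div_apply, div_pow]
  push_cast
  field_simp

lemma tendsto_choose_add_div_pow (j i : ℕ) :
    Tendsto (fun n : ℕ => ((n + j).choose j : ℝ) / n ^ (j + i)) atTop
      (𝓝 (1 / j ! * 0 ^ i)) := by
  have hchoose : Tendsto (fun n : ℕ => (n.choose j : ℝ) / n ^ j) atTop (𝓝 (1 / j !)) := by
    have := (isEquivalent_choose j).div (.refl (u := fun n : ℕ => (n : ℝ) ^ j))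
    refine this.symm.tendsto_nhds (tendsto_const_nhds.congr' ?_)
    filter_upwards [eventually_gt_atTop 0] with n hn
    simp only [Pi.div_apply]
    field_simp
  refine ((tendsto_add_div_pow hchoose j).mul
    (tendsto_inv_atTop_nhds_zero_nat.pow i)).congr fun n => ?_
  rw [pow_add, inv_pow, div_mul_eq_div_div, div_eq_mul_inv (_ / _)]

/-- `H` is eventually the polynomial function of degree at most `d` with Hilbert coefficients
`e 0, …, e d`. The values of `e` beyond `d` are irrelevant, and the subtractions never truncate. -/
def HasHilbertCoeffs (d : ℕ) (H e : ℕ → ℤ) : Prop :=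
  ∀ᶠ n in atTop, H n =
    ∑ i ∈ Finset.range (d + 1), (-1) ^ i * e i * ((n + d - i).choose (d - i) : ℤ)

lemma hasHilbertCoeffs_choose_mul (d : ℕ) (q : ℤ) :
    HasHilbertCoeffs d (fun n => (n + d).choose d * q) (Pi.single 0 q) :=
  .of_forall fun n => by
    rw [Finset.sum_range_succ']
    simp [mul_comm]

lemma hasHilbertCoeffs_choose_mul_add_choose_succ_mul (k : ℕ) (h q : ℤ) :
    HasHilbertCoeffs (k + 1) (fun n => (n + k).choose k * h + (n + k).choose (k + 1) * q)
      (Pi.single 0 q + Pi.single 1 (q - h)) :=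
  .of_forall fun n => calc
    ((n + k).choose k * h + (n + k).choose (k + 1) * q : ℤ)
      = (h - q) * (n + k).choose k + q * (n + (k + 1)).choose (k + 1) := by
        rw [← add_assoc n k 1, Nat.choose_succ_succ]
        push_cast
        ring
    _ = _ := by
        rw [Finset.sum_range_succ', Finset.sum_range_succ']
        simp

namespace HasHilbertCoeffs

variable {d : ℕ} {H H' e e' : ℕ → ℤ}

lemma sub (he : HasHilbertCoeffs d H e) (he' : HasHilbertCoeffs d H' e') :
    HasHilbertCoeffs d (H - H') (e - e') := by
  filter_upwards [he, he'] with n hn hn'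
  rw [Pi.sub_apply, hn, hn', ← Finset.sum_sub_distrib]
  exact Finset.sum_congr rfl fun i _ => by rw [Pi.sub_apply]; ring

lemma tendsto_div_pow (he : HasHilbertCoeffs d H e) :
    Tendsto (fun n : ℕ => (H n : ℝ) / n ^ d) atTop (𝓝 (e 0 / d !)) := by
  have hsum : Tendsto (fun n : ℕ => ∑ i ∈ Finset.range (d + 1), ((-1) ^ i * e i : ℝ) *
      (((n + (d - i)).choose (d - i) : ℝ) / n ^ (d - i + i))) atTop (𝓝 (∑ i ∈ Finset.range (d + 1),
      ((-1) ^ i * e i : ℝ) * (1 / (d - i)! * 0 ^ i))) :=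
    tendsto_finsetSum _ fun i _ => (tendsto_choose_add_div_pow (d - i) i).const_mul _
  rw [Finset.sum_range_succ', Finset.sum_eq_zero (by simp), zero_add] at hsum
  simp only [pow_zero, one_mul, mul_one, Nat.sub_zero, mul_one_div] at hsum
  refine hsum.congr' ?_
  filter_upwards [he] with n hn
  rw [hn]
  push_cast
  rw [Finset.sum_div]
  refine Finset.sum_congr rfl fun i hi => ?_
  have hid : i ≤ d := Nat.le_of_lt_succ (Finset.mem_range.mp hi)
  rw [Nat.sub_add_cancel hid, Nat.add_sub_assoc hid, mul_div_assoc]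

lemma zero_le_of_le_add (he : HasHilbertCoeffs d H e) (he' : HasHilbertCoeffs d H' e') (s : ℕ)
    (h : ∀ᶠ n in atTop, H n ≤ H' (n + s)) : e 0 ≤ e' 0 := by
  have := le_of_tendsto_of_tendsto he.tendsto_div_pow
    (tendsto_add_div_pow (f := fun n => (H' n : ℝ)) he'.tendsto_div_pow s) <| by
      filter_upwards [h] with n hn
      gcongr
  exact_mod_cast (div_le_div_iff_of_pos_right (by positivity)).mp this

lemma succ (he : HasHilbertCoeffs (d + 1) H e) (h0 : e 0 = 0) :
    HasHilbertCoeffs d H fun i => -e (i + 1) := by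
  filter_upwards [he] with n hn
  rw [hn, Finset.sum_range_succ', h0]
  simp [pow_succ, ← add_assoc n]

lemma zero_eq (he : HasHilbertCoeffs d H e) (he' : HasHilbertCoeffs d H e') : e 0 = e' 0 :=
  (he.zero_le_of_le_add he' 0 (.of_forall fun _ => le_rfl)).antisymm
    (he'.zero_le_of_le_add he 0 (.of_forall fun _ => le_rfl))

lemma unique (he : HasHilbertCoeffs d H e) (he' : HasHilbertCoeffs d H e') {i : ℕ} (hi : i ≤ d) :
    e i = e' i := by
  induction d generalizing H e e' i with
  | zero => exact Nat.le_zero.mp hi ▸ he.zero_eq he'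
  | succ d ih =>
    rcases i with _ | i
    · exact he.zero_eq he'
    · have hsub := ih ((he.sub he').succ (sub_eq_zero.mpr (he.zero_eq he')))
        ((he.sub he).succ (sub_self _)) (Nat.le_of_succ_le_succ hi)
      simp only [Pi.sub_apply] at hsub
      linarith

end HasHilbertCoeffs

end HilbertCoefficients

section Reduction

lemma pow_add_eq_pow_mul_pow_of_pow_succ_eq {M : Type*} [CommMonoid M] {x y : M} {r : ℕ}
    (h : x ^ (r + 1) = y * x ^ r) (n : ℕ) : x ^ (n + r) = y ^ n * x ^ r := by
  induction n with
  | zero => simp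
  | succ n ih =>
    rw [add_right_comm, pow_succ, ih, mul_assoc, ← pow_succ, h, ← mul_assoc, ← pow_succ]

lemma le_radical_of_pow_succ_eq {R : Type*} [CommSemiring R] {I Q : Ideal R} {r : ℕ}
    (h : I ^ (r + 1) = Q * I ^ r) : I ≤ Q.radical := fun _ hx =>
  ⟨r + 1, h.trans_le Ideal.mul_le_left (Ideal.pow_mem_pow hx (r + 1))⟩

end Reduction

section Huneke

variable {A : Type*} [CommRing A] {k : ℕ} {a : Fin (k + 1) → A} {I : Ideal A} {H : ℕ → ℕ}
  {e : ℕ → ℤ} {q : ℕ}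

lemma IsQuasiRegular.length_quotient_mul_span_pow_eq_natCast (ha : IsQuasiRegular a)
    (hI : Ideal.span (Set.range a) ≤ I) {h : ℕ} (hh : Module.length A (A ⧸ I) = h)
    (hq : Module.length A (A ⧸ Ideal.span (Set.range a)) = q) (n : ℕ) :
    Module.length A (A ⧸ I * Ideal.span (Set.range a) ^ n) =
      ((n + k).choose k * h + (n + k).choose (k + 1) * q : ℕ) := by
  rw [ha.length_quotient_mul_span_pow hI, ha.length_quotient_span_pow, hh, hq]
  norm_cast

lemma IsQuasiRegular.hilbertCoeff_zero_eq (ha : IsQuasiRegular a)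
    (hI : Ideal.span (Set.range a) ≤ I) {r : ℕ}
    (hr : I ^ (r + 1) = Ideal.span (Set.range a) * I ^ r)
    (hH : ∀ n, Module.length A (A ⧸ I ^ (n + 1)) = H n)
    (he : HasHilbertCoeffs (k + 1) (fun n => H n) e)
    (hq : Module.length A (A ⧸ Ideal.span (Set.range a)) = q) : e 0 = q := by
  have hH0 : Module.length A (A ⧸ I) = H 0 := by
    rw [← hH 0, zero_add, pow_one]
  refine le_antisymm ?_ ?_
  · have upper (n : ℕ) : H n ≤ (n + k).choose k * H 0 + (n + k).choose (k + 1) * q := by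
      have hle : I * Ideal.span (Set.range a) ^ n ≤ I ^ (n + 1) :=
        pow_succ' I n ▸ Ideal.mul_mono_right (Ideal.pow_right_mono hI n)
      have := length_quotient_le_of_le hle
      rw [hH, ha.length_quotient_mul_span_pow_eq_natCast hI hH0 hq] at this
      exact_mod_cast this
    simpa using he.zero_le_of_le_add
      (hasHilbertCoeffs_choose_mul_add_choose_succ_mul k (H 0) q) 0
      (.of_forall fun n => by exact_mod_cast upper n)
  · have lower (n : ℕ) : (n + (k + 1)).choose (k + 1) * q ≤ H (n + r) := by
      have hle : I ^ (n + 1 + r) ≤ Ideal.span (Set.range a) ^ (n + 1) :=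
        (pow_add_eq_pow_mul_pow_of_pow_succ_eq hr _).trans_le Ideal.mul_le_left
      have := length_quotient_le_of_le hle
      rw [add_right_comm n 1 r, hH, ha.length_quotient_span_pow, hq, add_assoc,
        add_comm 1 k] at this
      exact_mod_cast this
    simpa using (hasHilbertCoeffs_choose_mul (k + 1) q).zero_le_of_le_add he r
      (.of_forall fun n => by exact_mod_cast lower n)

lemma IsQuasiRegular.hilbertCoeff_eq_of_sq_eq (ha : IsQuasiRegular a)
    (hI : Ideal.span (Set.range a) ≤ I) (hsq : I ^ 2 = Ideal.span (Set.range a) * I)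
    (hH : ∀ n, Module.length A (A ⧸ I ^ (n + 1)) = H n)
    (he : HasHilbertCoeffs (k + 1) (fun n => H n) e)
    (hq : Module.length A (A ⧸ Ideal.span (Set.range a)) = q) {i : ℕ} (hi : i ≤ k + 1) :
    e i = (Pi.single 0 (q : ℤ) + Pi.single 1 (q - H 0 : ℤ) : ℕ → ℤ) i := by
  have hH0 : Module.length A (A ⧸ I) = H 0 := by
    rw [← hH 0, zero_add, pow_one]
  have hH_eq (n : ℕ) : H n = (n + k).choose k * H 0 + (n + k).choose (k + 1) * q := by
    have hpow := pow_add_eq_pow_mul_pow_of_pow_succ_eq (r := 1) (by simpa using hsq) n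
    have := hH n
    rw [hpow, pow_one, mul_comm, ha.length_quotient_mul_span_pow_eq_natCast hI hH0 hq] at this
    exact_mod_cast this.symm
  refine he.unique ?_ hi
  convert hasHilbertCoeffs_choose_mul_add_choose_succ_mul k (H 0) q using 2 with n
  exact_mod_cast hH_eq n

lemma IsQuasiRegular.sub_lt_hilbertCoeff_one_of_sq_ne [IsLocalRing A] (ha : IsQuasiRegular a)
    (hI : Ideal.span (Set.range a) ≤ I) (hsq : I ^ 2 ≠ Ideal.span (Set.range a) * I)
    (hH : ∀ n, Module.length A (A ⧸ I ^ (n + 1)) = H n)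
    (he : HasHilbertCoeffs (k + 1) (fun n => H n) e)
    (hq : Module.length A (A ⧸ Ideal.span (Set.range a)) = q) (h0 : e 0 = q) :
    e 0 - H 0 < e 1 := by
  have hH0 : Module.length A (A ⧸ I) = H 0 := by
    rw [← hH 0, zero_add, pow_one]
  have gap (n : ℕ) : (n + k).choose k + H (n + 1) ≤
      (n + 1 + k).choose k * H 0 + (n + 1 + k).choose (k + 1) * q := by
    have := ha.choose_add_length_quotient_pow_le hI hsq n
    rw [hH (n + 1), ha.length_quotient_mul_span_pow_eq_natCast hI hH0 hq] at this
    exact_mod_cast this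
  have hdiff := ((hasHilbertCoeffs_choose_mul_add_choose_succ_mul k (H 0) q).sub he).succ
    (by simp [h0])
  have hle := (hasHilbertCoeffs_choose_mul k 1).zero_le_of_le_add hdiff 1 <| .of_forall fun n => by
    have : ((n + k).choose k + H (n + 1) : ℤ) ≤
      (n + 1 + k).choose k * H 0 + (n + 1 + k).choose (k + 1) * q := by exact_mod_cast gap n
    simp only [Pi.sub_apply]
    linarith
  have : 1 ≤ -(q - H 0 - e 1) := by simpa using hle
  linarith

end Huneke

lemma moduleLength_eq_iff {A M : Type*} [CommRing A] [AddCommGroup M] [Module A M] {n : ℕ} :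
    moduleLength A M = (n : ℕ∞) ↔ Module.length A M = n := by
  rw [moduleLength, ← Module.coe_length]
  exact WithBot.coe_inj

theorem huneke_equality_general (A : Type*) [CommRing A] [IsLocalRing A] [IsNoetherianRing A]
    (d : ℕ) (hd : 0 < d) (hCM : IsCohenMacaulayLocal A d)
    (I Q : Ideal A) (hI : IsPrimaryToMax A I)
    (a : Fin d → A) (hQ : Q = Ideal.span (Set.range a)) (hQI : Q ≤ I)
    (hred : ∃ r : ℕ, I ^ (r + 1) = Q * I ^ r)
    (H : ℕ → ℕ)
    (hH : ∀ n : ℕ, moduleLength A (A ⧸ I ^ (n + 1)) = (H n : ℕ∞))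
    (e : ℕ → ℤ) (N : ℕ)
    (hHS : ∀ n ≥ N, (H n : ℤ) =
      ∑ i ∈ Finset.range (d + 1),
        (-1) ^ i * e i * ((n + d - i).choose (d - i) : ℤ)) :
    (e 1 = e 0 - (H 0 : ℤ) ↔ I ^ 2 = Q * I) ∧
      (I ^ 2 = Q * I → ∀ i : ℕ, 2 ≤ i → i ≤ d → e i = 0) := by
  obtain ⟨k, rfl⟩ := Nat.exists_eq_succ_of_ne_zero hd.ne'
  obtain ⟨r, hr⟩ := hred
  subst hQ
  simp only [moduleLength_eq_iff] at hH
  have he : HasHilbertCoeffs (k + 1) (fun n => H n) e := Filter.eventually_atTop.mpr ⟨N, hHS⟩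
  have ha : IsQuasiRegular a := hCM.isQuasiRegular
    (fun i => hI.1 (hQI (Ideal.subset_span (Set.mem_range_self i))))
    (hI.2.trans (Ideal.radical_le_radical_iff.mpr (le_radical_of_pow_succ_eq hr)))
  obtain ⟨q, hq⟩ : ∃ q : ℕ, Module.length A (A ⧸ Ideal.span (Set.range a)) = q := by
    refine ENat.ne_top_iff_exists.mp (ne_top_of_le_ne_top (ENat.natCast_ne_top (H r)) ?_) |>.imp
      fun _ => Eq.symm
    exact hH r ▸ length_quotient_le_of_le (hr.trans_le Ideal.mul_le_left)
  have h0 : e 0 = q := ha.hilbertCoeff_zero_eq hQI hr hH he hq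
  refine ⟨⟨fun h1 => ?_, fun hsq => ?_⟩, fun hsq i hi hik => ?_⟩
  · by_contra hsq
    exact (ha.sub_lt_hilbertCoeff_one_of_sq_ne hQI hsq hH he hq h0).ne' h1
  · simpa [h0] using ha.hilbertCoeff_eq_of_sq_eq hQI hsq hH he hq (i := 1) (by lia)
  · rw [ha.hilbertCoeff_eq_of_sq_eq hQI hsq hH he hq hik]
    simp [show i ≠ 0 by lia, show i ≠ 1 by lia]

/-- Huneke's theorem: `e₁ = e₀ - ℓ_A(A/I)` iff `I² = QI`; in that case `eᵢ = 0` for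
`2 ≤ i ≤ d`.  Here `H n = ℓ_A(A/I^{n+1})` (so `H 0 = ℓ_A(A/I)`) and the Hilbert
coefficients `e i` are specified by the Hilbert–Samuel polynomial. -/
theorem huneke_equality (A : Type*) [CommRing A] [IsLocalRing A] [IsNoetherianRing A]
    [Infinite (ResidueField A)]
    (d : ℕ) (hd : 0 < d) (hCM : IsCohenMacaulayLocal A d)
    (I Q : Ideal A) (hI : IsPrimaryToMax A I)
    (a : Fin d → A) (hQ : Q = Ideal.span (Set.range a)) (hQI : Q ≤ I)
    (hred : ∃ r : ℕ, I ^ (r + 1) = Q * I ^ r)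
    (H : ℕ → ℕ)
    (hH : ∀ n : ℕ, moduleLength A (A ⧸ I ^ (n + 1)) = (H n : ℕ∞))
    (e : ℕ → ℤ) (N : ℕ)
    (hHS : ∀ n ≥ N, (H n : ℤ) =
      ∑ i ∈ Finset.range (d + 1),
        (-1) ^ i * e i * ((n + d - i).choose (d - i) : ℤ)) :
    (e 1 = e 0 - (H 0 : ℤ) ↔ I ^ 2 = Q * I) ∧
      (I ^ 2 = Q * I → ∀ i : ℕ, 2 ≤ i → i ≤ d → e i = 0) :=
  huneke_equality_general A d hd hCM I Q hI a hQ hQI hred H hH e N hHS
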